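/- Deterministic finite-time convergence (core of Theorem 1): suppose the edge relation E is strongly connected and the drop pattern w is such that every edge has infinitely many successful transmissions, i.e., for every (j,i) ∈ E and every K ∈ ℕ there exists k ≥ K with w_k(j,i) = true. Then there exists a time step k_0 ∈ ℕ such that for every k ≥ k_0 and every node j, x_k(j) = q_m, where q_m = max_{i∈V} x_0(i). -/

import Mathlib

/-!
A lower bound on the state of a node persists, since states never decrease, and it is passed on
along every link that succeeds infinitely often. Hence each initial value is eventually a lower
bound for the state of every node reachable from its source along such links, and finitely many
nodes make the time uniform. Since no state ever exceeds an upper bound of the initial values, all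
states then equal their maximum.
-/

open Filter Relation

section TimeVaryingLinks

variable {V α : Type*} [Preorder α] {R : ℕ → V → V → Prop} {x : ℕ → V → α}

/-- The max-consensus dynamics over a time-varying digraph, where `R k j i` means that node `j`
receives the state of node `i` at step `k`. The maximum is encoded as a least upper bound, so that
neither a lattice structure nor finiteness of the in-neighborhoods is presupposed. -/
def IsMaxConsensus (R : ℕ → V → V → Prop) (x : ℕ → V → α) : Prop :=
  ∀ k j, IsLUB (x k '' insert j {i | R k j i}) (x (k + 1) j)

/-- The links `i → j` that are successful infinitely often. The source comes first, as in a path,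
whereas `R k j i` has the receiver first. -/
def RecurrentLink (R : ℕ → V → V → Prop) (i j : V) : Prop :=
  ∃ᶠ k in atTop, R k j i

namespace IsMaxConsensus

theorem monotone (hx : IsMaxConsensus R x) : Monotone x :=
  monotone_nat_of_le_succ fun k j =>
    (hx k j).1 (Set.mem_image_of_mem _ (Set.mem_insert _ _))

theorem le_succ_of_link (hx : IsMaxConsensus R x) {k : ℕ} {i j : V} (hR : R k j i) :
    x k i ≤ x (k + 1) j :=
  (hx k j).1 (Set.mem_image_of_mem _ (Set.mem_insert_of_mem _ hR))

theorem le_of_forall_zero_le (hx : IsMaxConsensus R x) {c : α} (hc : ∀ i, x 0 i ≤ c) (k : ℕ) :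
    ∀ j, x k j ≤ c := by
  induction k with
  | zero => exact hc
  | succ k ih => exact fun j => (hx k j).2 (Set.forall_mem_image.2 fun i _ => ih i)

theorem eventually_le_of_recurrentLink (hx : IsMaxConsensus R x) {a : α} {i j : V}
    (hij : RecurrentLink R i j) (ha : ∀ᶠ k in atTop, a ≤ x k i) :
    ∀ᶠ k in atTop, a ≤ x k j := by
  obtain ⟨k, hR, hk⟩ := (hij.and_eventually ha).exists
  filter_upwards [eventually_ge_atTop (k + 1)] with l hl
  calc
    a ≤ x k i := hk
    _ ≤ x (k + 1) j := hx.le_succ_of_link hR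
    _ ≤ x l j := hx.monotone hl j

theorem eventually_zero_le_of_reflTransGen (hx : IsMaxConsensus R x) {i j : V}
    (hij : ReflTransGen (RecurrentLink R) i j) : ∀ᶠ k in atTop, x 0 i ≤ x k j := by
  induction hij with
  | refl => exact .of_forall fun k => hx.monotone k.zero_le i
  | tail _ hlink ih => exact hx.eventually_le_of_recurrentLink hlink ih

end IsMaxConsensus

theorem maxCUCL_deterministic_finite_time_convergence_general [Finite V]
    (hx : IsMaxConsensus R x)
    (hreach : ∀ i j, ∃ m, x 0 i ≤ x 0 m ∧ ReflTransGen (RecurrentLink R) m j) :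
    ∃ k₀ : ℕ, ∀ k, k₀ ≤ k → ∀ j, IsLUB (Set.range (x 0)) (x k j) := by
  have eventually_zero_le : ∀ᶠ k in atTop, ∀ j i, x 0 i ≤ x k j := by
    refine eventually_all.2 fun j => eventually_all.2 fun i => ?_
    obtain ⟨m, him, hmj⟩ := hreach i j
    exact (hx.eventually_zero_le_of_reflTransGen hmj).mono fun _ => him.trans
  obtain ⟨k₀, hk₀⟩ := eventually_atTop.1 eventually_zero_le
  exact ⟨k₀, fun k hk j => ⟨Set.forall_mem_range.2 (hk₀ k hk j), fun _ hc =>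
    hx.le_of_forall_zero_le (Set.forall_mem_range.1 hc) k j⟩⟩

end TimeVaryingLinks

theorem isLUB_image_sup' {ι α : Type*} [SemilatticeSup α] {s : Finset ι} (hs : s.Nonempty)
    (f : ι → α) : IsLUB (f '' s) (s.sup' hs f) :=
  ⟨Set.forall_mem_image.2 fun _ hi => Finset.le_sup' f hi,
    fun _ hc => Finset.sup'_le hs f (Set.forall_mem_image.1 hc)⟩

theorem isLUB_range_univ_sup' {ι α : Type*} [Fintype ι] [Nonempty ι] [SemilatticeSup α]
    (f : ι → α) : IsLUB (Set.range f) (Finset.univ.sup' Finset.univ_nonempty f) := by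
  simpa only [Finset.coe_univ, Set.image_univ] using isLUB_image_sup' Finset.univ_nonempty f

theorem isMaxConsensus_of_eq_sup' {V α : Type*} [Fintype V] [DecidableEq V] [SemilatticeSup α]
    {R : ℕ → V → V → Prop} [∀ k j, DecidablePred (R k j)] {x : ℕ → V → α}
    (hx : ∀ k j, x (k + 1) j =
      (insert j (Finset.univ.filter (R k j))).sup' (Finset.insert_nonempty _ _) (x k)) :
    IsMaxConsensus R x := by
  intro k j
  simpa only [hx k j, Finset.coe_insert, Finset.coe_filter_univ] using
    isLUB_image_sup' (Finset.insert_nonempty j (Finset.univ.filter (R k j))) (x k)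

theorem reflTransGen_of_path {V : Type*} {r : V → V → Prop} {v : ℕ → V} {p : ℕ}
    (hv : ∀ s, 1 ≤ s → s ≤ p → r (v (s - 1)) (v s)) : ReflTransGen r (v 0) (v p) :=
  (reflTransGen_of_succ_of_le (fun s t => r (v s) (v t))
    (fun s hs => hv (s + 1) s.succ_pos hs.2) p.zero_le).lift v fun _ _ => id

theorem reflTransGen_of_forall_ne_exists_path {V : Type*} {r : V → V → Prop}
    (h : ∀ i j, i ≠ j → ∃ p, ∃ v : ℕ → V, v 0 = i ∧ v p = j ∧
      ∀ s, 1 ≤ s → s ≤ p → r (v (s - 1)) (v s)) (i j : V) : ReflTransGen r i j := by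
  obtain rfl | hij := eq_or_ne i j
  · exact .refl
  · obtain ⟨p, v, rfl, rfl, hv⟩ := h i j hij
    exact reflTransGen_of_path hv

/-- Deterministic finite-time convergence: if `E` is strongly
connected and every edge has infinitely many successful transmissions under `w`,
then there exists a time step `k₀` such that for every `k ≥ k₀` and every node
`j`, `x k j = q_m`, where `q_m = max_{i ∈ V} x 0 i`. -/
theorem maxCUCL_deterministic_finite_time_convergence
    {V : Type*} [Fintype V] [Nonempty V] [DecidableEq V]
    (E : V → V → Prop) [DecidableRel E]
    (w : ℕ → V → V → Bool) (x : ℕ → V → ℝ)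
    (hx : ∀ k j, x (k + 1) j =
      ((insert j (Finset.univ.filter fun i => E j i ∧ w k j i = true)).sup'
        (Finset.insert_nonempty _ _) fun i => x k i))
    (hconn : ∀ i j : V, i ≠ j → ∃ p, ∃ v : ℕ → V, v 0 = i ∧ v p = j ∧
      ∀ s, 1 ≤ s → s ≤ p → E (v s) (v (s - 1)))
    (hinf : ∀ j i, E j i → ∀ K : ℕ, ∃ k, K ≤ k ∧ w k j i = true) :
    ∃ k₀ : ℕ, ∀ k, k₀ ≤ k → ∀ j,
      x k j = Finset.univ.sup' Finset.univ_nonempty (x 0) := by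
  have recurrent (i j : V) (hE : E j i) :
      RecurrentLink (fun k j i => E j i ∧ w k j i = true) i j :=
    frequently_atTop.2 fun K => (hinf j i hE K).imp fun _ hk => ⟨hk.1, hE, hk.2⟩
  obtain ⟨k₀, hk₀⟩ := maxCUCL_deterministic_finite_time_convergence_general
    (isMaxConsensus_of_eq_sup' hx) fun i j => ⟨i, le_rfl, ReflTransGen.mono recurrent i j
      (reflTransGen_of_forall_ne_exists_path (r := Function.swap E) hconn i j)⟩
  exact ⟨k₀, fun k hk j => (hk₀ k hk j).unique (isLUB_range_univ_sup' (x 0))⟩
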